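/- arXiv:1902.04741 — 2 statements merged into one kernel-verified Lean document; each statement's English description precedes it below -/
import Mathlib

section
/- Let f : Xⁿ → ℝ be a function and g_1, ..., g_n : Xⁿ → ℝ≥0 such that f(x) − f(y) ≤ ∑_{i=1}^n g_i(x)·1[x_i ≠ y_i] for all x, y ∈ Xⁿ, with sup_x ∑_i g_i(x)² ≤ σ². Then for independent random variables X = (X_1,...,X_n), Pr[|f(X) − E f(X)| > α] ≤ 2·exp(−α²/(2σ²)). (Talagrand's convex-distance concentration inequality in this self-bounding form.) -/
open MeasureTheory Classical

namespace Talagrand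

/-- Pointwise inequalities behind the one-dimensional case. -/
lemma key (u : ℝ) (hu : 0 ≤ u) : ∃ t : ℝ, 0 ≤ t ∧ t ≤ 1 ∧
    Real.exp (u - t * u + t ^ 2 / 2) ≤ 1 + u ∧ Real.exp (-u) ≤ 1 - (u - t * u + t ^ 2 / 2) := by
  rcases le_total u 1 with h | h
  · refine ⟨u, hu, h, ?_, ?_⟩
    · have h1 := Real.le_log_one_add_of_nonneg hu
      have h2 : u - u * u + u ^ 2 / 2 ≤ 2 * u / (u + 2) := by
        rw [le_div_iff₀ (by positivity)]
        nlinarith [pow_nonneg hu 3]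
      calc _ ≤ Real.exp (Real.log (1 + u)) := Real.exp_le_exp.2 (h2.trans h1)
        _ = 1 + u := Real.exp_log (by positivity)
    · have h1 := Real.quadratic_le_exp_of_nonneg hu
      rw [Real.exp_neg]
      have h3 : 0 < 1 + u + u ^ 2 / 2 := by positivity
      calc (Real.exp u)⁻¹ ≤ (1 + u + u ^ 2 / 2)⁻¹ := inv_anti₀ h3 h1
        _ ≤ _ := by
          rw [inv_le_iff_one_le_mul₀ h3]
          nlinarith [pow_nonneg hu 4]
  · refine ⟨1, by norm_num, le_refl _, ?_, ?_⟩
    · have h1 := Real.one_sub_le_exp_neg (1 / 2)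
      have h2 : Real.exp (u - 1 * u + 1 ^ 2 / 2) * Real.exp (-(1 / 2)) = 1 := by
        rw [← Real.exp_add, Real.exp_eq_one_iff]; ring
      nlinarith [Real.exp_pos (u - 1 * u + 1 ^ 2 / 2)]
    · have h1 := Real.add_one_le_exp u
      have h2 : Real.exp (-u) * Real.exp u = 1 := by
        rw [← Real.exp_add, Real.exp_eq_one_iff]; ring
      nlinarith [Real.exp_pos (-u)]

/-- Essential infimum of a real function. -/
noncomputable def ei {X : Type*} [MeasurableSpace X] (μ : Measure X) (u : X → ℝ) : ℝ :=
  sSup {a : ℝ | ∀ᵐ x ∂μ, a ≤ u x}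

lemma ei_bdd {X : Type*} [MeasurableSpace X] (μ : Measure X) [IsProbabilityMeasure μ]
    (u : X → ℝ) (C : ℝ) (hC : ∀ x, |u x| ≤ C) : BddAbove {a : ℝ | ∀ᵐ x ∂μ, a ≤ u x} := by
  refine ⟨C, fun a ha => ?_⟩
  obtain ⟨x, hx⟩ := Filter.Eventually.exists (f := ae μ) ha
  exact hx.trans (abs_le.1 (hC x)).2

lemma le_ei {X : Type*} [MeasurableSpace X] (μ : Measure X) [IsProbabilityMeasure μ]
    (u : X → ℝ) (C : ℝ) (hC : ∀ x, |u x| ≤ C) (a : ℝ) (ha : ∀ᵐ x ∂μ, a ≤ u x) : a ≤ ei μ u :=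
  le_csSup (ei_bdd μ u C hC) ha

lemma ei_ne {X : Type*} [MeasurableSpace X] (μ : Measure X)
    (u : X → ℝ) (C : ℝ) (hC : ∀ x, |u x| ≤ C) : {a : ℝ | ∀ᵐ x ∂μ, a ≤ u x}.Nonempty :=
  ⟨-C, by
    rw [Set.mem_ofPred_eq]
    exact Filter.Eventually.of_forall fun x => (abs_le.1 (hC x)).1⟩

lemma lt_ei {X : Type*} [MeasurableSpace X] (μ : Measure X) [IsProbabilityMeasure μ]
    (u : X → ℝ) (C : ℝ) (hC : ∀ x, |u x| ≤ C) (c : ℝ) : c < ei μ u ↔ ∃ q : ℚ, c < q ∧ ∀ᵐ x ∂μ, (q : ℝ) ≤ u x := by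
  constructor
  · intro h
    obtain ⟨q, h1, h2⟩ := exists_rat_btwn h
    obtain ⟨a, ha, h3⟩ := exists_lt_of_lt_csSup (ei_ne μ u C hC) h2
    refine ⟨q, h1, ?_⟩
    filter_upwards [ha] with x hx using h3.le.trans hx
  · rintro ⟨q, h1, h2⟩
    exact h1.trans_le (le_ei μ u C hC q h2)

lemma ei_le {X : Type*} [MeasurableSpace X] (μ : Measure X) [IsProbabilityMeasure μ]
    (u : X → ℝ) (C : ℝ) (hC : ∀ x, |u x| ≤ C) : ∀ᵐ x ∂μ, ei μ u ≤ u x := by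
  have : ∀ q : ℚ, ∀ᵐ x ∂μ, (q : ℝ) < ei μ u → (q : ℝ) ≤ u x := by
    intro q
    by_cases h : (q : ℝ) < ei μ u
    · obtain ⟨r, h1, h2⟩ := (lt_ei μ u C hC q).1 h
      filter_upwards [h2] with x hx _ using h1.le.trans hx
    · exact Filter.Eventually.of_forall fun x h' => absurd h' h
  filter_upwards [ae_all_iff.2 this] with x hx
  exact le_of_forall_rat_lt_imp_le hx

lemma abs_ei {X : Type*} [MeasurableSpace X] (μ : Measure X) [IsProbabilityMeasure μ]
    (u : X → ℝ) (C : ℝ) (hC : ∀ x, |u x| ≤ C) : |ei μ u| ≤ C := by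
  obtain ⟨x, hx⟩ := (ei_le μ u C hC).exists
  exact abs_le.2 ⟨le_ei μ u C hC _ (Filter.Eventually.of_forall fun x => (abs_le.1 (hC x)).1),
    hx.trans (abs_le.1 (hC x)).2⟩


lemma measurable_ei {X Y : Type*} [MeasurableSpace X] [MeasurableSpace Y] (μ : Measure X)
    [IsProbabilityMeasure μ] (u : Y × X → ℝ) (hu : Measurable u) (C : ℝ) (hC : ∀ z, |u z| ≤ C) :
    Measurable fun y => ei μ fun x => u (y, x) := by
  refine measurable_of_Ioi fun c => ?_
  have : (fun y => ei μ fun x => u (y, x)) ⁻¹' Set.Ioi c =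
      ⋃ q : ℚ, {y | c < q ∧ μ (Prod.mk y ⁻¹' {z | u z < q}) = 0} := by
    ext y
    simp only [Set.mem_preimage, Set.mem_Ioi, Set.mem_iUnion, Set.mem_ofPred_eq]
    rw [lt_ei μ _ C (fun x => hC _)]
    simp only [ae_iff, not_le]
    rfl
  rw [this]
  refine MeasurableSet.iUnion fun q => ?_
  refine MeasurableSet.inter (MeasurableSet.const _) ?_
  exact measurable_measure_prodMk_left (measurableSet_lt hu measurable_const)
    (measurableSet_singleton 0)

lemma intb {X : Type*} [MeasurableSpace X] (μ : Measure X) [IsProbabilityMeasure μ] {u : X → ℝ}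
    (hu : Measurable u) (C : ℝ) (hC : ∀ x, |u x| ≤ C) : Integrable u μ :=
  Integrable.of_bound hu.aestronglyMeasurable C (Filter.Eventually.of_forall hC)

lemma intexp {X : Type*} [MeasurableSpace X] (μ : Measure X) [IsProbabilityMeasure μ] {u : X → ℝ}
    (hu : Measurable u) (C : ℝ) (hC : ∀ x, |u x| ≤ C) : Integrable (fun x => Real.exp (u x)) μ :=
  intb μ (by fun_prop) (Real.exp C) fun x => by
    rw [Real.abs_exp]; exact Real.exp_le_exp.2 (abs_le.1 (hC x)).2

/-- Passing to the essential infimum in the defining relation. -/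
lemma rel_ei {X : Type*} [MeasurableSpace X] (μ : Measure X) [IsProbabilityMeasure μ]
    (b : X → ℝ) (C : ℝ) (hC : ∀ x, |b x| ≤ C) (l bx t : ℝ) (ht : 0 ≤ t)
    (h : ∀ᵐ x' ∂μ, l ≤ (1 - t) * bx + t * b x' + t ^ 2 / 2) :
    l ≤ (1 - t) * bx + t * ei μ b + t ^ 2 / 2 := by
  rcases ht.eq_or_lt with rfl | ht
  · obtain ⟨x', hx'⟩ := h.exists
    simpa using hx'
  · have : (l - (1 - t) * bx - t ^ 2 / 2) / t ≤ ei μ b := by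
      refine le_ei μ b C hC _ ?_
      filter_upwards [h] with x' hx'
      rw [div_le_iff₀ ht]; linarith
    rw [div_le_iff₀ ht] at this; linarith

lemma one_upper {X : Type*} [MeasurableSpace X] (μ : Measure X) [IsProbabilityMeasure μ]
    (b E : X → ℝ) (hb : Measurable b) (C : ℝ) (hC : ∀ x, |b x| ≤ C) (hE : Integrable E μ)
    (hE0 : ∀ x, 0 < E x)
    (h : ∀ x t, 0 ≤ t → t ≤ 1 → ∀ᵐ x' ∂μ,
      Real.log (E x) ≤ (1 - t) * b x + t * b x' + t ^ 2 / 2) :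
    ∫ x, E x ∂μ ≤ Real.exp (∫ x, b x ∂μ) := by
  set m := ei μ b
  have hbi := intb μ hb C hC
  have h1 : ∀ᵐ x ∂μ, E x ≤ Real.exp m * (1 + (b x - m)) := by
    filter_upwards [ei_le μ b C hC] with x hx
    obtain ⟨t, t0, t1, hk, -⟩ := key (b x - m) (sub_nonneg.2 hx)
    have h2 := rel_ei μ b C hC _ _ t t0 (h x t t0 t1)
    calc E x = Real.exp (Real.log (E x)) := (Real.exp_log (hE0 x)).symm
      _ ≤ Real.exp (m + ((b x - m) - t * (b x - m) + t ^ 2 / 2)) := by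
        apply Real.exp_le_exp.2
        change _ ≤ (1 - t) * b x + t * m + t ^ 2 / 2 at h2
        linarith
      _ ≤ _ := by
        rw [Real.exp_add]
        exact mul_le_mul_of_nonneg_left hk (Real.exp_pos _).le
  calc ∫ x, E x ∂μ ≤ ∫ x, Real.exp m * (1 + (b x - m)) ∂μ :=
        integral_mono_ae hE (((integrable_const _).add (hbi.sub (integrable_const _))).const_mul _) h1
    _ = Real.exp m * ((∫ x, b x ∂μ - m) + 1) := by
        have i1 : Integrable (fun x => b x - m) μ := hbi.sub (integrable_const _)
        rw [integral_const_mul, integral_add (integrable_const _) i1,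
          integral_sub hbi (integrable_const _)]
        simp; ring
    _ ≤ Real.exp m * Real.exp (∫ x, b x ∂μ - m) :=
        mul_le_mul_of_nonneg_left (Real.add_one_le_exp _) (Real.exp_pos _).le
    _ = _ := by rw [← Real.exp_add]; congr 1; ring

lemma one_lower {X : Type*} [MeasurableSpace X] (μ : Measure X) [IsProbabilityMeasure μ]
    (b L : X → ℝ) (hb : Measurable b) (C : ℝ) (hC : ∀ x, |b x| ≤ C) (hL : Integrable L μ)
    (h : ∀ x t, 0 ≤ t → t ≤ 1 → ∀ᵐ x' ∂μ, L x ≤ (1 - t) * b x + t * b x' + t ^ 2 / 2) :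
    ∫ x, Real.exp (-b x) ∂μ ≤ Real.exp (-∫ x, L x ∂μ) := by
  set m := ei μ b
  have h1 : ∀ᵐ x ∂μ, Real.exp (-b x) ≤ Real.exp (-m) * (1 - (L x - m)) := by
    filter_upwards [ei_le μ b C hC] with x hx
    obtain ⟨t, t0, t1, -, hk⟩ := key (b x - m) (sub_nonneg.2 hx)
    have h2 := rel_ei μ b C hC _ _ t t0 (h x t t0 t1)
    change _ ≤ (1 - t) * b x + t * m + t ^ 2 / 2 at h2
    calc Real.exp (-b x) = Real.exp (-m) * Real.exp (-(b x - m)) := by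
          rw [← Real.exp_add]; congr 1; ring
      _ ≤ _ := mul_le_mul_of_nonneg_left (by linarith) (Real.exp_pos _).le
  calc ∫ x, Real.exp (-b x) ∂μ ≤ ∫ x, Real.exp (-m) * (1 - (L x - m)) ∂μ :=
        integral_mono_ae (intexp μ hb.neg C (fun x => by simpa using hC x))
          (((integrable_const _).sub (hL.sub (integrable_const _))).const_mul _) h1
    _ = Real.exp (-m) * ((m - ∫ x, L x ∂μ) + 1) := by
        have i1 : Integrable (fun x => L x - m) μ := hL.sub (integrable_const _)
        rw [integral_const_mul, integral_sub (integrable_const _) i1,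
          integral_sub hL (integrable_const _)]
        simp; ring
    _ ≤ Real.exp (-m) * Real.exp (m - ∫ x, L x ∂μ) :=
        mul_le_mul_of_nonneg_left (Real.add_one_le_exp _) (Real.exp_pos _).le
    _ = _ := by rw [← Real.exp_add]; congr 1; ring

/-- Hölder in exponential form. -/
lemma holder {Y : Type*} [MeasurableSpace Y] (ν : Measure Y) [IsProbabilityMeasure ν]
    (W U V : Y → ℝ) (hU : Integrable (fun y => Real.exp (U y)) ν)
    (hV : Integrable (fun y => Real.exp (V y)) ν)
    (hW : Integrable (fun y => Real.exp (W y)) ν) (a b t : ℝ) (t0 : 0 ≤ t) (t1 : t ≤ 1)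
    (ha : ∫ y, Real.exp (U y) ∂ν ≤ Real.exp a) (hb : ∫ y, Real.exp (V y) ∂ν ≤ Real.exp b)
    (h : ∀ᵐ y ∂ν, W y ≤ (1 - t) * U y + t * V y + t ^ 2 / 2) :
    ∫ y, Real.exp (W y) ∂ν ≤ Real.exp ((1 - t) * a + t * b + t ^ 2 / 2) := by
  set K := (1 - t) * a + t * b + t ^ 2 / 2
  have h1 : ∀ᵐ y ∂ν, Real.exp (W y) ≤ Real.exp K *
      ((1 - t) * (Real.exp (-a) * Real.exp (U y)) + t * (Real.exp (-b) * Real.exp (V y))) := by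
    filter_upwards [h] with y hy
    have hc := convexOn_exp.2 (Set.mem_univ (-a + U y)) (Set.mem_univ (-b + V y))
      (sub_nonneg.2 t1) t0 (by ring)
    simp only [smul_eq_mul] at hc
    rw [← Real.exp_add, ← Real.exp_add]
    calc Real.exp (W y) ≤ Real.exp (K + ((1 - t) * (-a + U y) + t * (-b + V y))) := by
          apply Real.exp_le_exp.2; simp only [K]; linarith
      _ ≤ _ := by
          rw [Real.exp_add]; exact mul_le_mul_of_nonneg_left hc (Real.exp_pos _).le
  calc _ ≤ _ := integral_mono_ae hW
        ((((hU.const_mul _).const_mul _).add ((hV.const_mul _).const_mul _)).const_mul _) h1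
    _ = Real.exp K * ((1 - t) * (Real.exp (-a) * ∫ y, Real.exp (U y) ∂ν)
          + t * (Real.exp (-b) * ∫ y, Real.exp (V y) ∂ν)) := by
        simp only [Pi.add_apply]
        rw [integral_const_mul, integral_add ((hU.const_mul _).const_mul _)
          ((hV.const_mul _).const_mul _)]
        simp only [integral_const_mul]
    _ ≤ Real.exp K * ((1 - t) * (Real.exp (-a) * Real.exp a)
          + t * (Real.exp (-b) * Real.exp b)) := by
        have := sub_nonneg.2 t1
        gcongr
    _ = _ := by rw [← Real.exp_add, ← Real.exp_add]; simp

/-- One-step inf-convolution. -/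
noncomputable def q (u m : ℝ) : ℝ :=
  (1 - max 0 (min 1 (u - m))) * u + max 0 (min 1 (u - m)) * m + max 0 (min 1 (u - m)) ^ 2 / 2

lemma q_le (u m t : ℝ) (t0 : 0 ≤ t) (t1 : t ≤ 1) : q u m ≤ (1 - t) * u + t * m + t ^ 2 / 2 := by
  unfold q
  rcases le_total (u - m) 0 with h | h
  · rw [min_eq_right (by linarith), max_eq_left h]; nlinarith
  · rcases le_total (u - m) 1 with h' | h'
    · rw [min_eq_right h', max_eq_right h]; nlinarith [sq_nonneg (u - m - t)]
    · rw [min_eq_left h', max_eq_right zero_le_one]; nlinarith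

lemma q_ge (u m A g : ℝ) (hu : A ≤ u) (hm : A - g ≤ m) : A - g ^ 2 / 2 ≤ q u m := by
  unfold q
  have h0 : 0 ≤ max 0 (min 1 (u - m)) := le_max_left _ _
  have h1 : max 0 (min 1 (u - m)) ≤ 1 := max_le zero_le_one (min_le_left _ _)
  generalize max 0 (min 1 (u - m)) = t at h0 h1
  nlinarith [sq_nonneg (t - g), mul_le_mul_of_nonneg_left hm h0,
    mul_le_mul_of_nonneg_left hu (sub_nonneg.2 h1)]

lemma q_abs (u m C : ℝ) (hu : |u| ≤ C) (hm : |m| ≤ C) : |q u m| ≤ C := by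
  rw [abs_le] at *
  constructor
  · have := q_ge u m (-C) 0 hu.1 (by linarith [hm.1]); linarith
  · have := q_le u m 0 le_rfl zero_le_one; linarith [hu.2]

lemma measurable_q {X : Type*} [MeasurableSpace X] {u m : X → ℝ} (hu : Measurable u)
    (hm : Measurable m) : Measurable fun x => q (u x) (m x) := by
  unfold q; fun_prop

lemma integral_cons {X : Type*} [MeasurableSpace X] (n : ℕ) (μ : Fin (n + 1) → Measure X)
    [∀ i, IsProbabilityMeasure (μ i)] (H : (Fin (n + 1) → X) → ℝ) (hH : Measurable H) (C : ℝ)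
    (hC : ∀ x, |H x| ≤ C) :
    ∫ z, H z ∂Measure.pi μ =
      ∫ x, ∫ y, H (Fin.cons x y) ∂Measure.pi (fun j => μ (Fin.succ j)) ∂(μ 0) := by
  have h := measurePreserving_piFinSuccAbove μ 0
  have h2 := h.integral_comp' fun p => H ((MeasurableEquiv.piFinSuccAbove (fun _ => X) 0).symm p)
  simp only [MeasurableEquiv.symm_apply_apply] at h2
  rw [h2, integral_prod]
  · simp only [MeasurableEquiv.piFinSuccAbove_symm_apply, Fin.insertNthEquiv_zero]
    rfl
  · exact intb _ (hH.comp (MeasurableEquiv.measurable _)) C (fun _ => hC _)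

lemma measurable_cons {X : Type*} [MeasurableSpace X] (n : ℕ) :
    Measurable fun p : X × (Fin n → X) => (Fin.cons p.1 p.2 : Fin (n + 1) → X) := by
  refine measurable_pi_lambda _ fun i => ?_
  refine Fin.cases ?_ (fun j => ?_) i
  · simpa using measurable_fst
  · simp only [Fin.cons_succ]; fun_prop

universe u

theorem main {X : Type u} [MeasurableSpace X] (n : ℕ) : ∀ (Θ : Type u) [MeasurableSpace Θ]
    (μ : Fin n → Measure X) [∀ i, IsProbabilityMeasure (μ i)]
    (F : Θ × (Fin n → X) → ℝ) (_ : Measurable F) (C : ℝ) (_ : ∀ z, |F z| ≤ C),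
    ∃ Q : Θ × (Fin n → X) → ℝ, Measurable Q ∧ (∀ z, |Q z| ≤ C) ∧
      (∀ θ x A (g : Fin n → ℝ), (∀ i, 0 ≤ g i) →
        (∀ y, A - ∑ i, (if x i ≠ y i then g i else 0) ≤ F (θ, y)) →
        A - (∑ i, g i ^ 2) / 2 ≤ Q (θ, x)) ∧
      (∀ θ, ∫ x, Real.exp (Q (θ, x)) ∂Measure.pi μ ≤ Real.exp (∫ x, F (θ, x) ∂Measure.pi μ)) ∧
      (∀ θ, ∫ x, Real.exp (-F (θ, x)) ∂Measure.pi μ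
        ≤ Real.exp (-∫ x, Q (θ, x) ∂Measure.pi μ)) := by
  induction n with
  | zero =>
    intro Θ _ μ _ F hF C hC
    refine ⟨F, hF, hC, ?_, ?_, ?_⟩
    · intro θ x A g _ h
      simpa using h x
    · intro θ
      have : ∀ x, F (θ, x) = F (θ, default) := fun x => by rw [Subsingleton.elim x default]
      simp only [this]; simp
    · intro θ
      have : ∀ x, F (θ, x) = F (θ, default) := fun x => by rw [Subsingleton.elim x default]
      simp only [this]; simp
  | succ n ih =>
    intro Θ _ μ _ F hF C hC
    set ν := Measure.pi (fun j : Fin n => μ j.succ) with hν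
    have hG : Measurable fun p : (Θ × X) × (Fin n → X) =>
        F (p.1.1, (Fin.cons p.1.2 p.2 : Fin (n + 1) → X)) :=
      hF.comp ((measurable_fst.comp measurable_fst).prodMk
        ((measurable_cons n).comp ((measurable_snd.comp measurable_fst).prodMk measurable_snd)))
    obtain ⟨R, hR, hRC, hRa, hRb, hRc⟩ := ih (Θ × X) (fun j => μ j.succ)
      (fun p => F (p.1.1, (Fin.cons p.1.2 p.2 : Fin (n + 1) → X))) hG C (fun _ => hC _)
    -- the essential infimum
    let m : Θ × (Fin n → X) → ℝ := fun p => ei (μ 0) fun x' => R ((p.1, x'), p.2)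
    have hm : Measurable m :=
      measurable_ei (μ 0) (fun w : (Θ × (Fin n → X)) × X => R ((w.1.1, w.2), w.1.2))
        (hR.comp (by fun_prop)) C (fun _ => hRC _)
    have hmC : ∀ p, |m p| ≤ C := fun p => abs_ei _ _ C (fun _ => hRC _)
    let Q : Θ × (Fin (n + 1) → X) → ℝ := fun p =>
      q (R ((p.1, p.2 0), fun j => p.2 j.succ)) (m (p.1, fun j => p.2 j.succ))
    have hQ : Measurable Q :=
      measurable_q (hR.comp (by fun_prop)) (hm.comp (by fun_prop))
    have hQC : ∀ z, |Q z| ≤ C := fun z => q_abs _ _ _ (hRC _) (hmC _)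
    have hQcons : ∀ θ x y, Q (θ, (Fin.cons x y : Fin (n + 1) → X)) = q (R ((θ, x), y)) (m (θ, y)) :=
      fun θ x y => by simp [Q]
    have hQdef : ∀ θ x, Q (θ, x) =
        q (R ((θ, x 0), fun j => x j.succ)) (m (θ, fun j => x j.succ)) := fun _ _ => rfl
    clear_value Q
    have hFc : ∀ θ, Measurable fun p : X × (Fin n → X) =>
        F (θ, (Fin.cons p.1 p.2 : Fin (n + 1) → X)) := fun θ =>
      hF.comp (measurable_const.prodMk (measurable_cons n))
    have hQc : ∀ θ, Measurable fun p : X × (Fin n → X) =>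
        Q (θ, (Fin.cons p.1 p.2 : Fin (n + 1) → X)) := fun θ =>
      hQ.comp (measurable_const.prodMk (measurable_cons n))
    have hRx : ∀ θ x, Measurable fun y => R ((θ, x), y) := fun θ x => hR.comp (by fun_prop)
    have hQx : ∀ θ x, Measurable fun y => Q (θ, (Fin.cons x y : Fin (n + 1) → X)) := fun θ x =>
      (hQc θ).comp (measurable_prodMk_left (x := x))
    have hFx : ∀ θ x, Measurable fun y => F (θ, (Fin.cons x y : Fin (n + 1) → X)) := fun θ x =>
      (hFc θ).comp (measurable_prodMk_left (x := x))
    -- a.e. relation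
    have hrel : ∀ θ, ∀ᵐ x' ∂(μ 0), ∀ᵐ y ∂ν, m (θ, y) ≤ R ((θ, x'), y) := by
      intro θ
      rw [Measure.ae_ae_comm]
      · exact Filter.Eventually.of_forall fun y =>
          ei_le (μ 0) (fun x' => R ((θ, x'), y)) C (fun _ => hRC _)
      · exact measurableSet_le (hm.comp (by fun_prop)) (hR.comp (by fun_prop))
    have hrel2 : ∀ θ x t, 0 ≤ t → t ≤ 1 → ∀ x', (∀ᵐ y ∂ν, m (θ, y) ≤ R ((θ, x'), y)) →
        ∀ᵐ y ∂ν, Q (θ, (Fin.cons x y : Fin (n + 1) → X)) ≤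
          (1 - t) * R ((θ, x), y) + t * R ((θ, x'), y) + t ^ 2 / 2 := by
      intro θ x t t0 t1 x' h
      filter_upwards [h] with y hy
      rw [hQcons]
      have := q_le (R ((θ, x), y)) (m (θ, y)) t t0 t1
      have := mul_le_mul_of_nonneg_left hy t0
      linarith
    have absint : ∀ (u : (Fin n → X) → ℝ), (∀ y, |u y| ≤ C) → |∫ y, u y ∂ν| ≤ C := by
      intro u hu
      have := norm_integral_le_of_norm_le_const (μ := ν) (f := u) (C := C)
        (Filter.Eventually.of_forall hu)
      simpa using this
    refine ⟨Q, hQ, hQC, ?_, ?_, ?_⟩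
    · intro θ x A g hg h
      have h1 : A - (∑ i : Fin n, g i.succ ^ 2) / 2 ≤ R ((θ, x 0), fun j => x j.succ) := by
        refine hRa (θ, x 0) _ A (fun j => g j.succ) (fun j => hg _) fun y => ?_
        have := h (Fin.cons (x 0) y)
        simpa [Fin.sum_univ_succ] using this
      have h2 : A - (∑ i : Fin n, g i.succ ^ 2) / 2 - g 0 ≤ m (θ, fun j => x j.succ) := by
        refine le_ei (μ 0) _ C (fun _ => hRC _) _ (Filter.Eventually.of_forall fun x' => ?_)
        have := hRa (θ, x') (fun j => x j.succ) (A - g 0) (fun j => g j.succ) (fun j => hg _)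
          fun y => ?_
        · linarith
        · have h3 := h (Fin.cons x' y)
          rw [Fin.sum_univ_succ] at h3
          simp only [Fin.cons_zero, Fin.cons_succ] at h3
          have h4 : (if x 0 ≠ x' then g 0 else 0) ≤ g 0 := by
            split_ifs
            · exact le_rfl
            · exact hg 0
          simp only
          linarith
      have h3 := q_ge _ _ _ _ h1 h2
      rw [Fin.sum_univ_succ]
      rw [hQdef]
      linarith
    · intro θ
      rw [integral_cons n μ (fun z => Real.exp (Q (θ, z))) (by fun_prop) (Real.exp C)
          (fun x => by rw [Real.abs_exp]; exact Real.exp_le_exp.2 (abs_le.1 (hQC _)).2),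
        integral_cons n μ (fun z => F (θ, z)) (by fun_prop) C (fun _ => hC _)]
      have hE0 : ∀ x, 0 < ∫ y, Real.exp (Q (θ, (Fin.cons x y : Fin (n + 1) → X))) ∂ν := fun x =>
        integral_exp_pos (intexp ν (hQx θ x) C (fun _ => hQC _))
      refine one_upper (μ 0) (fun x => ∫ y, F (θ, (Fin.cons x y : Fin (n + 1) → X)) ∂ν) _
        (StronglyMeasurable.integral_prod_right (hFc θ).stronglyMeasurable).measurable C
        (fun x => absint _ fun _ => hC _) ?_ hE0 ?_
      · exact (intexp ((μ 0).prod ν) (hQc θ) C (fun _ => hQC _)).integral_prod_left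
      · intro x t t0 t1
        filter_upwards [hrel θ] with x' hx'
        rw [Real.log_le_iff_le_exp (hE0 x)]
        exact holder ν _ (fun y => R ((θ, x), y)) (fun y => R ((θ, x'), y))
          (intexp ν (hRx θ x) C (fun _ => hRC _)) (intexp ν (hRx θ x') C (fun _ => hRC _))
          (intexp ν (hQx θ x) C (fun _ => hQC _)) _ _ t t0 t1 (hRb (θ, x)) (hRb (θ, x'))
          (hrel2 θ x t t0 t1 x' hx')
    · intro θ
      rw [integral_cons n μ (fun z => Real.exp (-F (θ, z))) (by fun_prop) (Real.exp C)
          (fun x => by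
            rw [Real.abs_exp]; exact Real.exp_le_exp.2 (by linarith [(abs_le.1 (hC (θ, x))).1])),
        integral_cons n μ (fun z => Q (θ, z)) (by fun_prop) C (fun _ => hQC _)]
      have hbm : Measurable fun x => ∫ y, R ((θ, x), y) ∂ν :=
        (StronglyMeasurable.integral_prod_right (f := fun x y => R ((θ, x), y))
          (Measurable.stronglyMeasurable (hR.comp (by fun_prop)))).measurable
      have hbC : ∀ x, |∫ y, R ((θ, x), y) ∂ν| ≤ C := fun x => absint _ fun _ => hRC _
      calc ∫ x, ∫ y, Real.exp (-F (θ, (Fin.cons x y : Fin (n + 1) → X))) ∂ν ∂(μ 0)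
          ≤ ∫ x, Real.exp (-∫ y, R ((θ, x), y) ∂ν) ∂(μ 0) := by
            refine integral_mono ?_ ?_ fun x => hRc (θ, x)
            · exact (intexp ((μ 0).prod ν) (hFc θ).neg C
                (fun _ => by simpa using hC _)).integral_prod_left
            · exact intexp (μ 0) hbm.neg C (fun x => by simpa using hbC x)
        _ ≤ _ := by
            refine one_lower (μ 0) (fun x => ∫ y, R ((θ, x), y) ∂ν) _ hbm C hbC ?_ ?_
            · exact (intb ((μ 0).prod ν) (hQc θ) C (fun _ => hQC _)).integral_prod_left
            · intro x t t0 t1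
              filter_upwards [hrel θ] with x' hx'
              have i1 := intb ν (hRx θ x) C (fun _ => hRC _)
              have i2 := intb ν (hRx θ x') C (fun _ => hRC _)
              have := integral_mono_ae (intb ν (hQx θ x) C (fun _ => hQC _))
                (((i1.const_mul (1 - t)).add (i2.const_mul t)).add
                  (integrable_const (t ^ 2 / 2))) (hrel2 θ x t t0 t1 x' hx')
              refine this.trans (le_of_eq ?_)
              simp only [Pi.add_apply]
              have i3 : Integrable (fun y => (1 - t) * R ((θ, x), y) + t * R ((θ, x'), y)) ν :=
                (i1.const_mul (1 - t)).add (i2.const_mul t)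
              rw [integral_add i3
                  (integrable_const (t ^ 2 / 2)),
                integral_add (i1.const_mul (1 - t)) (i2.const_mul t), integral_const_mul,
                integral_const_mul]
              simp

end Talagrand

/-- Talagrand's concentration inequality.  If
`f(x) − f(y) ≤ ∑ᵢ gᵢ(x)·1[xᵢ ≠ yᵢ]` with `gᵢ ≥ 0` and
`supₓ ∑ᵢ gᵢ(x)² ≤ σ²`, then for independent coordinates (product measure),
`Pr[|f(X) − E f(X)| > α] ≤ 2 exp(−α²/(2σ²))`. -/
theorem stmt7 {𝓧 : Type*} [MeasurableSpace 𝓧] (n : ℕ)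
    (μ : Fin n → Measure 𝓧) [∀ i, IsProbabilityMeasure (μ i)]
    (f : (Fin n → 𝓧) → ℝ) (hf : Measurable f) (B : ℝ) (hbd : ∀ x, |f x| ≤ B)
    (g : Fin n → (Fin n → 𝓧) → ℝ) (hg : ∀ i x, 0 ≤ g i x)
    (σ2 : ℝ)
    (hstab : ∀ x y, f x - f y ≤ ∑ i, if x i ≠ y i then g i x else 0)
    (hvar : ∀ x, ∑ i, g i x ^ 2 ≤ σ2)
    (α : ℝ) (hα : 0 < α) :
    Measure.pi μ {x | α < |f x - ∫ y, f y ∂Measure.pi μ|}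
      ≤ ENNReal.ofReal (2 * Real.exp (-α ^ 2 / (2 * σ2))) := by
  set P := Measure.pi μ with hP
  set e := ∫ y, f y ∂P with he
  rcases le_or_gt σ2 0 with hσ | hσ
  · refine prob_le_one.trans ?_
    rw [← ENNReal.ofReal_one]
    apply ENNReal.ofReal_le_ofReal
    have : 0 ≤ -α ^ 2 / (2 * σ2) := div_nonneg_of_nonpos (by nlinarith) (by linarith)
    have := Real.one_le_exp this
    linarith
  set lam := α / σ2 with hlam
  have hl : 0 < lam := div_pos hα hσ
  have hlC : ∀ x, |lam * f x| ≤ lam * B := fun x => by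
    rw [abs_mul, abs_of_pos hl]; exact mul_le_mul_of_nonneg_left (hbd x) hl.le
  have hlm : Measurable fun x => lam * f x := by fun_prop
  obtain ⟨Q, hQ, hQC, hQa, hQb, hQc⟩ := Talagrand.main n (PUnit) μ (fun p => lam * f p.2)
    (by fun_prop) (lam * B) (fun _ => hlC _)
  have hQx : Measurable fun x => Q (PUnit.unit, x) := by fun_prop
  have hlow : ∀ x, lam * f x - lam ^ 2 * σ2 / 2 ≤ Q (PUnit.unit, x) := by
    intro x
    have h := hQa PUnit.unit x (lam * f x) (fun i => lam * g i x)
      (fun i => mul_nonneg hl.le (hg i x)) ?_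
    · have h2 : ∑ i, (lam * g i x) ^ 2 ≤ lam ^ 2 * σ2 := by
        simp only [mul_pow]
        rw [← Finset.mul_sum]
        exact mul_le_mul_of_nonneg_left (hvar x) (sq_nonneg _)
      linarith
    · intro y
      have h2 := mul_le_mul_of_nonneg_left (hstab x y) hl.le
      rw [Finset.mul_sum] at h2
      simp only [mul_ite, mul_zero] at h2
      linarith
  have hint : ∫ x, lam * f x ∂P = lam * e := integral_const_mul _ _
  have ilf := Talagrand.intb P hlm (lam * B) hlC
  have iel := Talagrand.intexp P hlm (lam * B) hlC
  have ien := Talagrand.intexp P hlm.neg (lam * B) (fun x => by simpa using hlC x)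
  -- the two exponential moments
  have hup : ∫ x, Real.exp (lam * f x) ∂P ≤ Real.exp (lam * e + lam ^ 2 * σ2 / 2) := by
    have h1 := hQb PUnit.unit
    simp only at h1
    rw [hint] at h1
    calc ∫ x, Real.exp (lam * f x) ∂P
        ≤ ∫ x, Real.exp (lam ^ 2 * σ2 / 2) * Real.exp (Q (PUnit.unit, x)) ∂P := by
          refine integral_mono iel ((Talagrand.intexp P hQx _ fun _ => hQC _).const_mul _) fun x => ?_
          simp only
          rw [← Real.exp_add]
          exact Real.exp_le_exp.2 (by linarith [hlow x])
      _ = Real.exp (lam ^ 2 * σ2 / 2) * ∫ x, Real.exp (Q (PUnit.unit, x)) ∂P :=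
          integral_const_mul _ _
      _ ≤ Real.exp (lam ^ 2 * σ2 / 2) * Real.exp (lam * e) :=
          mul_le_mul_of_nonneg_left h1 (Real.exp_pos _).le
      _ = _ := by rw [← Real.exp_add, add_comm]
  have hdn : ∫ x, Real.exp (-(lam * f x)) ∂P ≤ Real.exp (-(lam * e) + lam ^ 2 * σ2 / 2) := by
    refine (hQc PUnit.unit).trans (Real.exp_le_exp.2 ?_)
    have h1 : ∫ x, (lam * f x - lam ^ 2 * σ2 / 2) ∂P ≤ ∫ x, Q (PUnit.unit, x) ∂P :=
      integral_mono (ilf.sub (integrable_const _)) (Talagrand.intb P hQx _ fun _ => hQC _) hlow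
    rw [integral_sub ilf (integrable_const _), hint] at h1
    simp at h1
    linarith
  have hexp : -(lam * α) + lam ^ 2 * σ2 / 2 = -α ^ 2 / (2 * σ2) := by
    rw [hlam]; field_simp; ring
  have hA : P.real {x | e + α ≤ f x} ≤ Real.exp (-α ^ 2 / (2 * σ2)) := by
    refine (ProbabilityTheory.measure_ge_le_exp_mul_mgf (e + α) hl.le iel).trans ?_
    calc _ ≤ Real.exp (-lam * (e + α)) * Real.exp (lam * e + lam ^ 2 * σ2 / 2) :=
          mul_le_mul_of_nonneg_left hup (Real.exp_pos _).le
      _ = _ := by rw [← Real.exp_add, ← hexp]; congr 1; ring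
  have hB : P.real {x | f x ≤ e - α} ≤ Real.exp (-α ^ 2 / (2 * σ2)) := by
    refine (ProbabilityTheory.measure_le_le_exp_mul_mgf (e - α) (t := -lam) (by linarith)
      (by simpa using ien)).trans ?_
    calc _ ≤ Real.exp (- -lam * (e - α)) * Real.exp (-(lam * e) + lam ^ 2 * σ2 / 2) := by
          refine mul_le_mul_of_nonneg_left ?_ (Real.exp_pos _).le
          simpa [ProbabilityTheory.mgf] using hdn
      _ = _ := by rw [← Real.exp_add, ← hexp]; congr 1; ring
  have hsub : {x | α < |f x - e|} ⊆ {x | e + α ≤ f x} ∪ {x | f x ≤ e - α} := by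
    intro x hx
    rw [Set.mem_ofPred_eq] at hx
    rcases lt_abs.1 hx with h | h
    · left; simp only [Set.mem_ofPred_eq]; linarith
    · right; simp only [Set.mem_ofPred_eq]; linarith
  rw [← ofReal_measureReal]
  apply ENNReal.ofReal_le_ofReal
  have h1 := (measureReal_mono (μ := P) hsub).trans (measureReal_union_le _ _)
  linarith
end

section
/- Let OPT(C) be the maximum total value of a feasible selection of k items (partitioned among d properties with capacities k_i summing to k, item values in [0,1], dummy zero-value items guaranteeing feasibility) from a sample C = (c_1,...,c_n) of n i.i.d. items. Then Pr[|OPT(C) − E[OPT(C)]| ≥ α] ≤ 2·exp(−α²/(2k)). -/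
open MeasureTheory Finset Classical

noncomputable section

/-- A feasible assignment of the `k = ∑ kᵢ` constraint slots (slot `⟨i, _⟩`
belongs to property `i`) to items of the sample `C` (or to dummies, `none`):
assigned items have the required property, and no item is used twice. -/
def FeasibleSel {𝓧 : Type*} (d n : ℕ) (kvec : Fin d → ℕ) (P : Fin d → Set 𝓧)
    (C : Fin n → 𝓧) (f : ((i : Fin d) × Fin (kvec i)) → Option (Fin n)) : Prop :=
  (∀ l j, f l = some j → C j ∈ P l.1) ∧
  ∀ l l' j, f l = some j → f l' = some j → l = l'

/-- The total value of a selection (dummies have value 0). -/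
def selValue {𝓧 : Type*} (d n : ℕ) (kvec : Fin d → ℕ) (v : Fin d → 𝓧 → ℝ)
    (C : Fin n → 𝓧) (f : ((i : Fin d) × Fin (kvec i)) → Option (Fin n)) : ℝ :=
  ∑ l : (i : Fin d) × Fin (kvec i), (f l).elim 0 fun j => v l.1 (C j)

/-- `OPT(C)`: the maximum value of a feasible selection of `k` items from `C`. -/
def OPTval {𝓧 : Type*} (d n : ℕ) (kvec : Fin d → ℕ) (P : Fin d → Set 𝓧)
    (v : Fin d → 𝓧 → ℝ) (C : Fin n → 𝓧) : ℝ :=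
  ⨆ f : {f : ((i : Fin d) × Fin (kvec i)) → Option (Fin n) // FeasibleSel d n kvec P C f},
    selValue d n kvec v C f.1


/-- one-variable rate function -/
def rhoFun (w : ℝ) : ℝ := (1 - min w 1) * w + (min w 1) ^ 2 / 2

theorem rho_le_half {w : ℝ} (_hw : 0 ≤ w) : rhoFun w ≤ 1 / 2 := by
  unfold rhoFun
  rcases le_total w 1 with h | h
  · rw [min_eq_left h]; nlinarith [sq_nonneg (w - 1)]
  · rw [min_eq_right h]; norm_num

theorem rho_nonneg {w : ℝ} (hw : 0 ≤ w) : 0 ≤ rhoFun w := by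
  unfold rhoFun
  rcases le_total w 1 with h | h
  · rw [min_eq_left h]; nlinarith [sq_nonneg w, mul_nonneg (sub_nonneg.2 h) hw]
  · rw [min_eq_right h]; norm_num

theorem exp_rho_le {w : ℝ} (hw : 0 ≤ w) : Real.exp (rhoFun w) ≤ 1 + w := by
  rw [← Real.le_log_iff_exp_le (by linarith)]
  rcases le_total w 1 with h | h
  · refine le_trans ?_ (Real.le_log_one_add_of_nonneg hw)
    unfold rhoFun
    rw [min_eq_left h, le_div_iff₀ (by linarith)]
    nlinarith [mul_nonneg hw (sq_nonneg w)]
  · refine (rho_le_half hw).trans ?_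
    refine le_trans ?_ (Real.log_le_log (by norm_num) (show (1 : ℝ) + 1 ≤ 1 + w by linarith))
    refine le_trans ?_ (Real.le_log_one_add_of_nonneg zero_le_one)
    norm_num

theorem exp_neg_le_rho {w : ℝ} (hw : 0 ≤ w) : Real.exp (-w) ≤ 1 - rhoFun w := by
  rw [Real.exp_neg]
  have hq := Real.quadratic_le_exp_of_nonneg hw
  rcases le_total w 1 with h | h
  · unfold rhoFun
    rw [min_eq_left h]
    have h1 : (0 : ℝ) < 1 + w + w ^ 2 / 2 := by positivity
    refine (inv_anti₀ h1 hq).trans ?_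
    rw [inv_le_iff_one_le_mul₀ h1]
    nlinarith [sq_nonneg (w ^ 2)]
  · have : rhoFun w = 1 / 2 := by
      unfold rhoFun; rw [min_eq_right h]; norm_num
    rw [this]
    have : (2 : ℝ) ≤ Real.exp w := by nlinarith
    refine (inv_anti₀ (by norm_num) this).trans ?_
    norm_num

theorem rho_measurable : Measurable rhoFun := by
  unfold rhoFun
  fun_prop

theorem integrable_bdd {Ω : Type*} [MeasurableSpace Ω] {ν : Measure Ω} [IsProbabilityMeasure ν]
    {f : Ω → ℝ} (hf : Measurable f) {B : ℝ} (hB : ∀ x, |f x| ≤ B) : Integrable f ν :=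
  Integrable.of_bound hf.aestronglyMeasurable B (Filter.Eventually.of_forall fun x => hB x)

theorem exp_bdd {Ω : Type*} {f : Ω → ℝ} {B : ℝ} (hB : ∀ x, |f x| ≤ B) (x : Ω) :
    |Real.exp (f x)| ≤ Real.exp B := by
  rw [abs_of_pos (Real.exp_pos _)]
  exact Real.exp_le_exp.2 (abs_le.1 (hB x)).2

theorem exp_neg_bdd {Ω : Type*} {f : Ω → ℝ} {B : ℝ} (hB : ∀ x, |f x| ≤ B) (x : Ω) :
    |Real.exp (-f x)| ≤ Real.exp B :=
  exp_bdd (f := fun x => - f x) (fun x => by rw [abs_neg]; exact hB x) x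

theorem integral_bdd {Ω : Type*} [MeasurableSpace Ω] {ν : Measure Ω} [IsProbabilityMeasure ν]
    {f : Ω → ℝ} {B : ℝ} (hB : ∀ x, |f x| ≤ B) : |∫ x, f x ∂ν| ≤ B := by
  have := norm_integral_le_of_norm_le_const (μ := ν) (f := f) (C := B)
    (Filter.Eventually.of_forall fun x => hB x)
  simpa using this

theorem log_integral_exp_bdd {Ω : Type*} [MeasurableSpace Ω] {ν : Measure Ω}
    [IsProbabilityMeasure ν] {f : Ω → ℝ} (hf : Measurable f) {B : ℝ} (hB : ∀ x, |f x| ≤ B) :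
    0 < ∫ x, Real.exp (f x) ∂ν ∧ |Real.log (∫ x, Real.exp (f x) ∂ν)| ≤ B := by
  have hi : Integrable (fun x => Real.exp (f x)) ν :=
    integrable_bdd (by fun_prop) (exp_bdd hB)
  have h1 : Real.exp (-B) ≤ ∫ x, Real.exp (f x) ∂ν := by
    have := integral_mono (integrable_const (μ := ν) (Real.exp (-B))) hi
      (fun x => Real.exp_le_exp.2 (abs_le.1 (hB x)).1)
    simpa using this
  have h2 : ∫ x, Real.exp (f x) ∂ν ≤ Real.exp B := by
    have := integral_mono hi (integrable_const (μ := ν) (Real.exp B))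
      (fun x => Real.exp_le_exp.2 (abs_le.1 (hB x)).2)
    simpa using this
  have h0 : 0 < ∫ x, Real.exp (f x) ∂ν := (Real.exp_pos _).trans_le h1
  refine ⟨h0, abs_le.2 ⟨?_, ?_⟩⟩
  · rwa [Real.le_log_iff_exp_le h0]
  · rwa [Real.log_le_iff_le_exp h0]

theorem oneA {𝓧 : Type*} [MeasurableSpace 𝓧] (μ : Measure 𝓧) [IsProbabilityMeasure μ]
    {G h : 𝓧 → ℝ} (hG : Measurable G) (hh : Measurable h) {B B' : ℝ}
    (hGB : ∀ x, |G x| ≤ B) (hhB : ∀ x, |h x| ≤ B')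
    (H : ∀ t u s, 0 ≤ s → s ≤ 1 → G t ≤ (1 - s) * h t + s * h u + s ^ 2 / 2) :
    ∫ t, Real.exp (G t) ∂μ ≤ Real.exp (∫ t, h t ∂μ) := by
  have : Nonempty 𝓧 := μ.nonempty_of_neZero
  have hbb : BddBelow (Set.range h) := ⟨-B', by rintro _ ⟨x, rfl⟩; exact (abs_le.1 (hhB x)).1⟩
  set m := ⨅ x, h x with hm
  have hmle : ∀ x, m ≤ h x := fun x => ciInf_le hbb x
  have key : ∀ t, Real.exp (G t) ≤ Real.exp m * (1 + (h t - m)) := by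
    intro t
    have hw : 0 ≤ h t - m := sub_nonneg.2 (hmle t)
    have : G t ≤ m + rhoFun (h t - m) := by
      apply le_of_forall_pos_le_add
      intro ε hε
      obtain ⟨u, hu⟩ := exists_lt_of_ciInf_lt (show ⨅ x, h x < m + ε by linarith)
      have hs0 : 0 ≤ min (h t - m) 1 := le_min hw zero_le_one
      have hs1 : min (h t - m) 1 ≤ 1 := min_le_right _ _
      have := H t u _ hs0 hs1
      unfold rhoFun
      nlinarith
    calc Real.exp (G t) ≤ Real.exp (m + rhoFun (h t - m)) := Real.exp_le_exp.2 this
      _ = Real.exp m * Real.exp (rhoFun (h t - m)) := Real.exp_add _ _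
      _ ≤ _ := by gcongr; exact exp_rho_le hw
  have hhi : Integrable h μ := integrable_bdd hh hhB
  calc ∫ t, Real.exp (G t) ∂μ ≤ ∫ t, Real.exp m * (1 + (h t - m)) ∂μ := by
        apply integral_mono (integrable_bdd (by fun_prop) (exp_bdd hGB)) _ key
        exact ((integrable_const _).add (hhi.sub (integrable_const _))).const_mul _
    _ = Real.exp m * (1 + ((∫ t, h t ∂μ) - m)) := by
        have hs : Integrable (fun t => h t - m) μ := hhi.sub (integrable_const _)
        rw [integral_const_mul, integral_add (integrable_const _) hs,
          integral_sub hhi (integrable_const _)]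
        simp
    _ ≤ Real.exp m * Real.exp ((∫ t, h t ∂μ) - m) := by
        gcongr
        linarith [Real.add_one_le_exp ((∫ t, h t ∂μ) - m)]
    _ = _ := by rw [← Real.exp_add]; congr 1; ring

theorem oneB {𝓧 : Type*} [MeasurableSpace 𝓧] (μ : Measure 𝓧) [IsProbabilityMeasure μ]
    {h : 𝓧 → ℝ} (hh : Measurable h) {B' : ℝ} (hhB : ∀ x, |h x| ≤ B') :
    Integrable (fun t => (⨅ x, h x) + rhoFun (h t - ⨅ x, h x)) μ ∧
    ∫ t, ((⨅ x, h x) + rhoFun (h t - ⨅ x, h x)) ∂μ ≤ -Real.log (∫ t, Real.exp (-h t) ∂μ) := by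
  have hbb : BddBelow (Set.range h) := ⟨-B', by rintro _ ⟨x, rfl⟩; exact (abs_le.1 (hhB x)).1⟩
  set m := ⨅ x, h x with hm
  have hmle : ∀ x, m ≤ h x := fun x => ciInf_le hbb x
  have hri : Integrable (fun t => rhoFun (h t - m)) μ := by
    refine integrable_bdd (B := 1 / 2) (rho_measurable.comp (by fun_prop)) ?_
    intro x
    rw [abs_of_nonneg (rho_nonneg (sub_nonneg.2 (hmle x)))]
    exact rho_le_half (sub_nonneg.2 (hmle x))
  refine ⟨(integrable_const _).add hri, ?_⟩
  rw [integral_add (integrable_const _) hri]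
  have hn := log_integral_exp_bdd (ν := μ) (f := fun x => - h x) (by fun_prop) (B := B')
    (fun x => by rw [abs_neg]; exact hhB x)
  rw [le_neg, Real.log_le_iff_le_exp hn.1]
  calc ∫ t, Real.exp (-h t) ∂μ ≤ ∫ t, Real.exp (-m) * (1 - rhoFun (h t - m)) ∂μ := by
        apply integral_mono (integrable_bdd (by fun_prop) (exp_neg_bdd hhB))
        · exact ((integrable_const _).sub hri).const_mul _
        · intro t
          have := exp_neg_le_rho (sub_nonneg.2 (hmle t))
          calc Real.exp (-h t) = Real.exp (-m) * Real.exp (-(h t - m)) := by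
                rw [← Real.exp_add]; congr 1; ring
            _ ≤ _ := mul_le_mul_of_nonneg_left this (Real.exp_pos _).le
    _ = Real.exp (-m) * (1 - ∫ t, rhoFun (h t - m) ∂μ) := by
        rw [integral_const_mul, integral_sub (integrable_const _) hri]
        simp
    _ ≤ Real.exp (-m) * Real.exp (-∫ t, rhoFun (h t - m) ∂μ) := by
        gcongr
        linarith [Real.add_one_le_exp (-∫ t, rhoFun (h t - m) ∂μ)]
    _ = _ := by rw [← Real.exp_add]; congr 1; simp; ring

/-- weak transport cost of the weighted family `Y` from the point `x` -/
def wcost {𝓧 : Type*} {n : ℕ} {ι : Type} [Fintype ι] (x : Fin n → 𝓧) (w : ι → ℝ)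
    (Y : ι → Fin n → 𝓧) : ℝ :=
  ∑ j, (∑ i, if Y i j ≠ x j then w i else 0) ^ 2

/-- `F` lies below the weak infimum convolution of `f` -/
def WLe {𝓧 : Type*} {n : ℕ} (F f : (Fin n → 𝓧) → ℝ) : Prop :=
  ∀ (x : Fin n → 𝓧) (ι : Type) [Fintype ι] (w : ι → ℝ) (Y : ι → Fin n → 𝓧),
    (∀ i, 0 ≤ w i) → ∑ i, w i = 1 → F x ≤ ∑ i, w i * f (Y i) + wcost x w Y / 2

theorem WLe.step {𝓧 : Type*} {n : ℕ} {F f : (Fin (n + 1) → 𝓧) → ℝ} (H : WLe F f)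
    (t : 𝓧) (x : Fin n → 𝓧) {ι : Type} [Fintype ι] (w : ι → ℝ) (Y : ι → Fin n → 𝓧)
    (hw : ∀ i, 0 ≤ w i) (hw1 : ∑ i, w i = 1) (s : ι → ℝ) (u : ι → 𝓧)
    (hs0 : ∀ i, 0 ≤ s i) (hs1 : ∀ i, s i ≤ 1) :
    F (Fin.cons t x : Fin (n + 1) → 𝓧) ≤
      ∑ i, w i * ((1 - s i) * f (Fin.cons t (Y i) : Fin (n + 1) → 𝓧)
        + s i * f (Fin.cons (u i) (Y i) : Fin (n + 1) → 𝓧) + s i ^ 2 / 2)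
      + wcost x w Y / 2 := by
  have h := H (Fin.cons t x) (ι × Bool) (fun p => w p.1 * (if p.2 then s p.1 else 1 - s p.1))
    (fun p => Fin.cons (if p.2 then u p.1 else t) (Y p.1)) ?_ ?_
  · refine h.trans ?_
    have hc : wcost (Fin.cons t x : Fin (n + 1) → 𝓧)
        (fun p : ι × Bool => w p.1 * (if p.2 then s p.1 else 1 - s p.1))
        (fun p => Fin.cons (if p.2 then u p.1 else t) (Y p.1)) ≤
        ∑ i, w i * s i ^ 2 + wcost x w Y := by
      unfold wcost
      rw [Fin.sum_univ_succ]
      refine add_le_add ?_ (le_of_eq ?_)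
      · refine le_trans ?_ (Real.pow_arith_mean_le_arith_mean_pow univ w s (fun i _ => hw i) hw1
          (fun i _ => hs0 i) 2)
        have hnn : ∀ i, 0 ≤ w i * s i := fun i => mul_nonneg (hw i) (hs0 i)
        apply pow_le_pow_left₀
        · apply Finset.sum_nonneg
          intro p _
          rcases p with ⟨i, b⟩
          cases b <;> simp
          split_ifs
          · exact le_rfl
          · exact hnn i
        · rw [Fintype.sum_prod_type]
          apply Finset.sum_le_sum
          intro i _
          simp
          split_ifs
          · exact hnn i
          · exact le_rfl
      · apply Finset.sum_congr rfl
        intro j _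
        congr 1
        rw [Fintype.sum_prod_type]
        apply Finset.sum_congr rfl
        intro i _
        simp only [Fin.cons_succ, Fintype.sum_bool]
        by_cases hY : Y i j = x j
        · simp [hY]
        · simp [hY]; ring
    have he : ∑ p : ι × Bool, (w p.1 * (if p.2 then s p.1 else 1 - s p.1)) *
        f (Fin.cons (if p.2 then u p.1 else t) (Y p.1) : Fin (n + 1) → 𝓧) =
        ∑ i, w i * ((1 - s i) * f (Fin.cons t (Y i) : Fin (n + 1) → 𝓧)
        + s i * f (Fin.cons (u i) (Y i) : Fin (n + 1) → 𝓧)) := by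
      rw [Fintype.sum_prod_type]
      apply Finset.sum_congr rfl
      intro i _
      simp only [Fintype.sum_bool]
      simp
      ring
    have hsplit : ∑ i, w i * ((1 - s i) * f (Fin.cons t (Y i) : Fin (n + 1) → 𝓧)
        + s i * f (Fin.cons (u i) (Y i) : Fin (n + 1) → 𝓧) + s i ^ 2 / 2) =
        ∑ i, w i * ((1 - s i) * f (Fin.cons t (Y i) : Fin (n + 1) → 𝓧)
        + s i * f (Fin.cons (u i) (Y i) : Fin (n + 1) → 𝓧)) + (∑ i, w i * s i ^ 2) / 2 := by
      rw [Finset.sum_div, ← Finset.sum_add_distrib]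
      apply Finset.sum_congr rfl
      intro i _
      ring
    rw [he, hsplit]
    linarith
  · rintro ⟨i, b⟩
    cases b
    · simpa using mul_nonneg (hw i) (sub_nonneg.2 (hs1 i))
    · simpa using mul_nonneg (hw i) (hs0 i)
  · rw [Fintype.sum_prod_type]
    refine Eq.trans (Finset.sum_congr rfl fun i _ => ?_) hw1
    simp only [Fintype.sum_bool]
    simp
    ring

theorem WLe.le {𝓧 : Type*} {n : ℕ} {F f : (Fin n → 𝓧) → ℝ} (H : WLe F f) (x : Fin n → 𝓧) :
    F x ≤ f x := by
  have := H x Unit (fun _ => 1) (fun _ => x) (by simp) (by simp)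
  simpa [wcost] using this

theorem cons_meas {𝓧 : Type*} [MeasurableSpace 𝓧] (n : ℕ) :
    Measurable (fun p : 𝓧 × (Fin n → 𝓧) => (Fin.cons p.1 p.2 : Fin (n + 1) → 𝓧)) := by
  rw [measurable_pi_iff]
  intro j
  refine Fin.cases ?_ (fun j => ?_) j
  · simpa using measurable_fst
  · simp only [Fin.cons_succ]
    exact (measurable_pi_apply j).comp measurable_snd

theorem pi_fubini {𝓧 : Type*} [MeasurableSpace 𝓧] (μ : Measure 𝓧) [IsProbabilityMeasure μ]
    {n : ℕ} {f : (Fin (n + 1) → 𝓧) → ℝ} (hf : Measurable f) {B : ℝ} (hB : ∀ x, |f x| ≤ B) :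
    ∫ x, f x ∂(Measure.pi fun _ : Fin (n + 1) => μ) =
      ∫ x, ∫ t, f (Fin.cons t x : Fin (n + 1) → 𝓧) ∂μ ∂(Measure.pi fun _ : Fin n => μ) := by
  have hmp := (measurePreserving_piFinSuccAbove (fun _ : Fin (n + 1) => μ) 0).symm
  rw [← hmp.integral_comp']
  have : ∀ p : 𝓧 × (Fin n → 𝓧),
      (MeasurableEquiv.piFinSuccAbove (fun _ : Fin (n + 1) => 𝓧) 0).symm p =
        (Fin.cons p.1 p.2 : Fin (n + 1) → 𝓧) := by
    intro p
    simp [MeasurableEquiv.piFinSuccAbove, Fin.insertNthEquiv]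
  simp_rw [this]
  exact integral_prod_symm (fun p : 𝓧 × (Fin n → 𝓧) => f (Fin.cons p.1 p.2 : Fin (n + 1) → 𝓧))
    (integrable_bdd (hf.comp (cons_meas n)) (fun p => hB _))

theorem inner_meas {𝓧 : Type*} [MeasurableSpace 𝓧] (μ : Measure 𝓧) [IsProbabilityMeasure μ]
    {n : ℕ} {f : (Fin (n + 1) → 𝓧) → ℝ} (hf : Measurable f) :
    Measurable fun x : Fin n → 𝓧 => ∫ t, f (Fin.cons t x : Fin (n + 1) → 𝓧) ∂μ := by
  have h : StronglyMeasurable (fun p : 𝓧 × (Fin n → 𝓧) =>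
    f (Fin.cons p.1 p.2 : Fin (n + 1) → 𝓧)) := (hf.comp (cons_meas n)).stronglyMeasurable
  exact (h.integral_prod_left (μ := μ)).measurable

theorem cons_meas_left {𝓧 : Type*} [MeasurableSpace 𝓧] {n : ℕ} (x : Fin n → 𝓧)
    {f : (Fin (n + 1) → 𝓧) → ℝ} (hf : Measurable f) :
    Measurable fun t => f (Fin.cons t x : Fin (n + 1) → 𝓧) :=
  (hf.comp (cons_meas n)).comp (measurable_id.prodMk measurable_const)

theorem upper {𝓧 : Type*} [MeasurableSpace 𝓧] (μ : Measure 𝓧) [IsProbabilityMeasure μ] :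
    ∀ (n : ℕ) (F f : (Fin n → 𝓧) → ℝ) (B B' : ℝ), Measurable F → Measurable f →
      (∀ x, |F x| ≤ B) → (∀ x, |f x| ≤ B') → WLe F f →
      ∫ x, Real.exp (F x) ∂(Measure.pi fun _ : Fin n => μ) ≤
        Real.exp (∫ x, f x ∂(Measure.pi fun _ : Fin n => μ)) := by
  intro n
  induction n with
  | zero =>
    intro F f B B' hF hf hFB hfB H
    rw [integral_unique, integral_unique]
    simpa using H.le _
  | succ n ih =>
    intro F f B B' hF hf hFB hfB H
    rw [pi_fubini μ (f := fun x => Real.exp (F x)) (by fun_prop) (exp_bdd hFB),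
      pi_fubini μ hf hfB]
    have hlog : ∀ x : Fin n → 𝓧, _ := fun x => log_integral_exp_bdd (ν := μ)
      (cons_meas_left x hF) (fun t => hFB _)
    have := ih (fun x => Real.log (∫ t, Real.exp (F (Fin.cons t x : Fin (n + 1) → 𝓧)) ∂μ))
      (fun x => ∫ t, f (Fin.cons t x : Fin (n + 1) → 𝓧) ∂μ) B B'
      (Real.measurable_log.comp (inner_meas μ (f := fun x => Real.exp (F x)) (by fun_prop)))
      (inner_meas μ hf) (fun x => (hlog x).2) (fun x => integral_bdd (fun t => hfB _)) ?_
    · simpa only [Real.exp_log (hlog _).1] using this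
    · intro x ι _ w Y hw hw1
      rw [Real.log_le_iff_le_exp (hlog x).1, Real.exp_add, ← div_le_iff₀ (Real.exp_pos _)]
      have hint : ∀ i, Integrable (fun t => w i * f (Fin.cons t (Y i) : Fin (n + 1) → 𝓧)) μ :=
        fun i => (integrable_bdd (cons_meas_left _ hf) (fun t => hfB _)).const_mul _
      have h1 := oneA μ (G := fun t => F (Fin.cons t x : Fin (n + 1) → 𝓧) - wcost x w Y / 2)
        (h := fun t => ∑ i, w i * f (Fin.cons t (Y i) : Fin (n + 1) → 𝓧))
        (B := B + |wcost x w Y / 2|) (B' := B')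
        ((cons_meas_left _ hF).sub_const _)
        (Finset.measurable_sum _ fun i _ => (cons_meas_left _ hf).const_mul _)
        (fun t => (abs_sub _ _).trans (by gcongr; exact hFB _))
        (fun t => by
          refine (Finset.abs_sum_le_sum_abs _ _).trans ?_
          rw [← one_mul B', ← hw1, Finset.sum_mul]
          apply Finset.sum_le_sum
          intro i _
          rw [abs_mul, abs_of_nonneg (hw i)]
          exact mul_le_mul_of_nonneg_left (hfB _) (hw i))
        (fun t u s hs0 hs1 => by
          have := H.step t x w Y hw hw1 (fun _ => s) (fun _ => u) (fun _ => hs0) (fun _ => hs1)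
          simp only [mul_add, Finset.sum_add_distrib, ← Finset.sum_mul, hw1,
            mul_left_comm (w _), ← Finset.mul_sum] at this
          linarith)
      rw [integral_finsetSum _ (fun i _ => hint i)] at h1
      simp only [integral_const_mul, Real.exp_sub, integral_div] at h1
      exact h1

theorem lower {𝓧 : Type*} [MeasurableSpace 𝓧] (μ : Measure 𝓧) [IsProbabilityMeasure μ] :
    ∀ (n : ℕ) (F f : (Fin n → 𝓧) → ℝ) (B B' : ℝ), Measurable F → Measurable f →
      (∀ x, |F x| ≤ B) → (∀ x, |f x| ≤ B') → WLe F f →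
      ∫ x, Real.exp (-f x) ∂(Measure.pi fun _ : Fin n => μ) ≤
        Real.exp (-∫ x, F x ∂(Measure.pi fun _ : Fin n => μ)) := by
  have : Nonempty 𝓧 := μ.nonempty_of_neZero
  intro n
  induction n with
  | zero =>
    intro F f B B' hF hf hFB hfB H
    rw [integral_unique, integral_unique]
    simpa using H.le _
  | succ n ih =>
    intro F f B B' hF hf hFB hfB H
    rw [pi_fubini μ (f := fun x => Real.exp (-f x)) (by fun_prop) (exp_neg_bdd hfB),
      pi_fubini μ hF hFB]
    have hlog : ∀ x : Fin n → 𝓧, _ := fun x => log_integral_exp_bdd (ν := μ)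
      (cons_meas_left x hf.neg) (B := B') (fun t => by simpa using hfB _)
    simp only [Pi.neg_apply] at hlog
    have := ih (fun x => ∫ t, F (Fin.cons t x : Fin (n + 1) → 𝓧) ∂μ)
      (fun x => -Real.log (∫ t, Real.exp (-f (Fin.cons t x : Fin (n + 1) → 𝓧)) ∂μ)) B B'
      (inner_meas μ hF)
      (Real.measurable_log.comp (inner_meas μ (f := fun x => Real.exp (-f x)) (by fun_prop))).neg
      (fun x => integral_bdd (fun t => hFB _))
      (fun x => by rw [abs_neg]; exact (hlog x).2) ?_
    · simpa only [neg_neg, Real.exp_log (hlog _).1] using this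
    · intro x ι _ w Y hw hw1
      have hB := fun i => oneB μ (h := fun t => f (Fin.cons t (Y i) : Fin (n + 1) → 𝓧))
        (cons_meas_left _ hf) (fun t => hfB _)
      set m : ι → ℝ := fun i => ⨅ t, f (Fin.cons t (Y i) : Fin (n + 1) → 𝓧) with hm
      have hmle : ∀ i t, m i ≤ f (Fin.cons t (Y i) : Fin (n + 1) → 𝓧) := fun i t =>
        ciInf_le (f := fun t => f (Fin.cons t (Y i) : Fin (n + 1) → 𝓧))
          ⟨-B', by rintro _ ⟨x, rfl⟩; exact (abs_le.1 (hfB _)).1⟩ t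
      have key : ∀ t, F (Fin.cons t x : Fin (n + 1) → 𝓧) ≤
          ∑ i, w i * (m i + rhoFun (f (Fin.cons t (Y i) : Fin (n + 1) → 𝓧) - m i))
            + wcost x w Y / 2 := by
        intro t
        apply le_of_forall_pos_le_add
        intro ε hε
        have hu : ∀ i, ∃ u, f (Fin.cons u (Y i) : Fin (n + 1) → 𝓧) < m i + ε := fun i =>
          exists_lt_of_ciInf_lt (show m i < m i + ε by linarith)
        choose u hu using hu
        have hs0 : ∀ i, 0 ≤ min (f (Fin.cons t (Y i) : Fin (n + 1) → 𝓧) - m i) 1 := fun i =>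
          le_min (sub_nonneg.2 (hmle i t)) zero_le_one
        have hs1 : ∀ i, min (f (Fin.cons t (Y i) : Fin (n + 1) → 𝓧) - m i) 1 ≤ 1 := fun i =>
          min_le_right _ _
        refine (H.step t x w Y hw hw1 _ u hs0 hs1).trans ?_
        have : ∑ i, w i * (m i + rhoFun (f (Fin.cons t (Y i) : Fin (n + 1) → 𝓧) - m i))
            + wcost x w Y / 2 + ε = 
            ∑ i, w i * (m i + rhoFun (f (Fin.cons t (Y i) : Fin (n + 1) → 𝓧) - m i) + ε)
            + wcost x w Y / 2 := by
          simp only [mul_add, Finset.sum_add_distrib, ← Finset.sum_mul, hw1]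
          ring
        rw [this]
        refine add_le_add_left (Finset.sum_le_sum fun i _ =>
          mul_le_mul_of_nonneg_left ?_ (hw i)) _
        have a := hs0 i
        have b := hs1 i
        have c := hu i
        unfold rhoFun
        nlinarith
      have hint : ∀ i, Integrable (fun t => w i *
          (m i + rhoFun (f (Fin.cons t (Y i) : Fin (n + 1) → 𝓧) - m i))) μ :=
        fun i => (hB i).1.const_mul _
      calc ∫ t, F (Fin.cons t x : Fin (n + 1) → 𝓧) ∂μ ≤ _ :=
            integral_mono (integrable_bdd (cons_meas_left _ hF) (fun t => hFB _))
              ((integrable_finsetSum _ fun i _ => hint i).add (integrable_const _)) key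
        _ = ∑ i, w i * ∫ t, (m i + rhoFun (f (Fin.cons t (Y i) : Fin (n + 1) → 𝓧) - m i)) ∂μ
            + wcost x w Y / 2 := by
            simp only [Pi.add_apply]
            rw [integral_add (integrable_finsetSum _ fun i _ => hint i) (integrable_const _),
              integral_finsetSum _ (fun i _ => hint i)]
            simp only [integral_const_mul]
            simp
        _ ≤ _ := by
            gcongr with i _
            · exact hw i
            · exact (hB i).2


theorem mgf_bound {𝓧 : Type*} [MeasurableSpace 𝓧] (μ : Measure 𝓧) [IsProbabilityMeasure μ]
    {n : ℕ} {f : (Fin n → 𝓧) → ℝ} (hf : Measurable f) {B : ℝ} (hB : ∀ x, |f x| ≤ B) {k : ℕ}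
    (H : ∀ t : ℝ, 0 ≤ t → WLe (fun x => t * f x - k * t ^ 2 / 2) (fun x => t * f x)) :
    ProbabilityTheory.HasSubgaussianMGF
      (fun x => f x - ∫ y, f y ∂(Measure.pi fun _ : Fin n => μ)) (k : NNReal)
      (Measure.pi fun _ : Fin n => μ) := by
  set E := ∫ y, f y ∂(Measure.pi fun _ : Fin n => μ) with hE
  have hfi : Integrable f (Measure.pi fun _ : Fin n => μ) := integrable_bdd hf hB
  have b1 : ∀ t : ℝ, ∀ x, |t * f x| ≤ |t| * B := fun t x => by
    rw [abs_mul]; exact mul_le_mul_of_nonneg_left (hB x) (abs_nonneg _)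
  have b2 : ∀ t c : ℝ, ∀ x, |t * f x - c| ≤ |t| * B + |c| := fun t c x =>
    (abs_sub _ _).trans (by gcongr; exact b1 t x)
  constructor
  · intro t
    have : ∀ x, |t * (f x - E)| ≤ |t| * B + |t * E| := fun x => by
      rw [mul_sub]; exact b2 t _ x
    exact integrable_bdd (by fun_prop) (exp_bdd this)
  · intro t
    unfold ProbabilityTheory.mgf
    have e1 : ∀ x, Real.exp (t * (f x - E)) = Real.exp (t * f x) / Real.exp (t * E) := fun x => by
      rw [← Real.exp_sub]; congr 1; ring
    simp only [e1, integral_div]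
    rw [div_le_iff₀ (Real.exp_pos _), ← Real.exp_add]
    rcases le_total 0 t with ht | ht
    · have := upper μ n _ _ _ _ (by fun_prop) (by fun_prop) (b2 t _) (b1 t) (H t ht)
      simp only [Real.exp_sub, integral_div, integral_const_mul] at this
      rw [div_le_iff₀ (Real.exp_pos _), ← Real.exp_add] at this
      refine this.trans (le_of_eq ?_)
      congr 1
      simp
      ring
    · have := lower μ n _ _ _ _ (by fun_prop) (by fun_prop) (b2 (-t) _) (b1 (-t))
        (H (-t) (by linarith))
      rw [integral_sub (hfi.const_mul _) (integrable_const _), integral_const_mul, ← hE] at this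
      simp only [neg_mul, neg_neg] at this
      refine this.trans (le_of_eq ?_)
      congr 1
      simp

section
variable {𝓧 : Type*} {d n : ℕ} {kvec : Fin d → ℕ} {P : Fin d → Set 𝓧} {v : Fin d → 𝓧 → ℝ}

theorem feas_none (C : Fin n → 𝓧) : FeasibleSel d n kvec P C (fun _ => none) := by
  constructor <;> simp

theorem opt_bdd (C : Fin n → 𝓧) : BddAbove (Set.range
    fun f : {f : ((i : Fin d) × Fin (kvec i)) → Option (Fin n) // FeasibleSel d n kvec P C f} =>
      selValue d n kvec v C f.1) := (Set.finite_range _).bddAbove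

theorem le_opt (C : Fin n → 𝓧) {f : ((i : Fin d) × Fin (kvec i)) → Option (Fin n)}
    (hf : FeasibleSel d n kvec P C f) : selValue d n kvec v C f ≤ OPTval d n kvec P v C :=
  le_ciSup (opt_bdd C) (⟨f, hf⟩ :
    {f : ((i : Fin d) × Fin (kvec i)) → Option (Fin n) // FeasibleSel d n kvec P C f})

theorem exists_opt (C : Fin n → 𝓧) : ∃ f : ((i : Fin d) × Fin (kvec i)) → Option (Fin n),
    FeasibleSel d n kvec P C f ∧ selValue d n kvec v C f = OPTval d n kvec P v C := by
  have : Nonempty {f : ((i : Fin d) × Fin (kvec i)) → Option (Fin n) //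
    FeasibleSel d n kvec P C f} := ⟨⟨_, feas_none C⟩⟩
  obtain ⟨f, hf⟩ := exists_eq_ciSup_of_finite (f := fun f : {f : ((i : Fin d) × Fin (kvec i)) →
    Option (Fin n) // FeasibleSel d n kvec P C f} => selValue d n kvec v C f.1)
  exact ⟨f.1, f.2, hf⟩

theorem sel_nonneg (hv01 : ∀ i c, c ∈ P i → v i c ∈ Set.Icc (0 : ℝ) 1) (C : Fin n → 𝓧)
    {f : ((i : Fin d) × Fin (kvec i)) → Option (Fin n)}
    (hf : FeasibleSel d n kvec P C f) : 0 ≤ selValue d n kvec v C f := by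
  apply Finset.sum_nonneg
  intro l _
  cases h : f l with
  | none => simp
  | some j => simpa using (hv01 _ _ (hf.1 l j h)).1

theorem opt_nonneg (C : Fin n → 𝓧) : 0 ≤ OPTval d n kvec P v C :=
  le_trans (by simp [selValue]) (le_opt C (feas_none C))

theorem sel_le (hv01 : ∀ i c, c ∈ P i → v i c ∈ Set.Icc (0 : ℝ) 1) (C : Fin n → 𝓧)
    {f : ((i : Fin d) × Fin (kvec i)) → Option (Fin n)}
    (hf : FeasibleSel d n kvec P C f) : selValue d n kvec v C f ≤ ∑ i, kvec i := by
  have : selValue d n kvec v C f ≤ ∑ l : (i : Fin d) × Fin (kvec i), (1 : ℝ) := by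
    apply Finset.sum_le_sum
    intro l _
    cases h : f l with
    | none => simp
    | some j => simpa using (hv01 _ _ (hf.1 l j h)).2
  simpa using this

theorem opt_abs (hv01 : ∀ i c, c ∈ P i → v i c ∈ Set.Icc (0 : ℝ) 1) (C : Fin n → 𝓧) :
    |OPTval d n kvec P v C| ≤ (∑ i, kvec i : ℕ) := by
  rw [abs_of_nonneg (opt_nonneg C)]
  obtain ⟨f, hf, he⟩ := exists_opt (P := P) (v := v) (kvec := kvec) C
  rw [← he]
  exact_mod_cast sel_le hv01 C hf

theorem opt_meas [MeasurableSpace 𝓧] (hP : ∀ i, MeasurableSet (P i))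
    (hvmeas : ∀ i, Measurable (v i)) :
    Measurable (fun C : Fin n → 𝓧 => OPTval d n kvec P v C) := by
  have : (fun C : Fin n → 𝓧 => OPTval d n kvec P v C) = fun C =>
      ⨆ f : ((i : Fin d) × Fin (kvec i)) → Option (Fin n),
        if FeasibleSel d n kvec P C f then selValue d n kvec v C f else 0 := by
    funext C
    apply le_antisymm
    · obtain ⟨f, hf, he⟩ := exists_opt (P := P) (v := v) (kvec := kvec) C
      rw [← he]
      refine le_trans ?_ (le_ciSup (Set.finite_range _).bddAbove f)
      rw [if_pos hf]
    · apply ciSup_le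
      intro f
      split_ifs with h
      · exact le_opt C h
      · exact opt_nonneg C
  rw [this]
  refine Measurable.iSup fun f => Measurable.ite ?_ ?_ measurable_const
  · have hset : {C : Fin n → 𝓧 | FeasibleSel d n kvec P C f} =
        (⋂ l, ⋂ j, ⋂ _ : f l = some j, (fun C : Fin n → 𝓧 => C j) ⁻¹' P l.1) ∩
          {_C | ∀ l l' j, f l = some j → f l' = some j → l = l'} := by
      ext C
      simp [FeasibleSel]
    rw [hset]
    refine MeasurableSet.inter (MeasurableSet.iInter fun l => MeasurableSet.iInter fun j =>
        MeasurableSet.iInter fun _ => ?_) (MeasurableSet.const _)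
    exact (measurable_pi_apply j) (hP l.1)
  · unfold selValue
    refine Finset.measurable_sum _ fun l _ => ?_
    cases f l with
    | none => simp
    | some j => exact (hvmeas l.1).comp (measurable_pi_apply j)

theorem opt_stab (hv01 : ∀ i c, c ∈ P i → v i c ∈ Set.Icc (0 : ℝ) 1) (x : Fin n → 𝓧) :
    ∃ f : ((i : Fin d) × Fin (kvec i)) → Option (Fin n),
      (∀ l l' j, f l = some j → f l' = some j → l = l') ∧
      ∀ y : Fin n → 𝓧, OPTval d n kvec P v x ≤ OPTval d n kvec P v y +
        ∑ l, (f l).elim 0 (fun j => if y j ≠ x j then (1 : ℝ) else 0) := by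
  obtain ⟨f, hf, he⟩ := exists_opt (P := P) (v := v) (kvec := kvec) x
  refine ⟨f, hf.2, fun y => ?_⟩
  have key : ∀ l j, ((f l).bind fun j => if y j = x j then some j else none) = some j →
      f l = some j ∧ y j = x j := by
    intro l j h
    rw [Option.bind_eq_some_iff] at h
    obtain ⟨a, ha, hb⟩ := h
    split_ifs at hb with hc
    simp at hb
    subst hb
    exact ⟨ha, hc⟩
  have hg : FeasibleSel d n kvec P y
      (fun l => (f l).bind fun j => if y j = x j then some j else none) := by
    constructor
    · intro l j h
      obtain ⟨h1, h2⟩ := key l j h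
      rw [h2]
      exact hf.1 l j h1
    · intro l l' j h h'
      exact hf.2 l l' j (key l j h).1 (key l' j h').1
  rw [← he]
  refine le_trans ?_ (add_le_add_left (le_opt y hg) _)
  unfold selValue
  rw [← Finset.sum_add_distrib]
  apply Finset.sum_le_sum
  intro l _
  cases h : f l with
  | none => simp [h]
  | some j =>
    by_cases hc : y j = x j
    · simp [h, hc]
    · simpa [h, hc] using (hv01 _ _ (hf.1 l j h)).2

theorem sum_elim_le {L : Type*} [Fintype L] (f : L → Option (Fin n))
    (hf : ∀ l l' j, f l = some j → f l' = some j → l = l') (a : Fin n → ℝ) (ha : ∀ j, 0 ≤ a j) :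
    ∑ l, (f l).elim 0 a ≤ ∑ j, a j := by
  have h1 : ∀ l, (f l).elim 0 a = ∑ j, if f l = some j then a j else 0 := by
    intro l
    cases h : f l with
    | none => simp
    | some j => simp
  simp only [h1]
  rw [Finset.sum_comm]
  apply Finset.sum_le_sum
  intro j _
  by_cases hj : ∃ l, f l = some j
  · obtain ⟨l, hl⟩ := hj
    rw [Finset.sum_eq_single l]
    · simp [hl]
    · intro l' _ hne
      rw [if_neg]
      intro h
      exact hne (hf _ _ _ h hl)
    · simp
  · push Not at hj
    simp [hj, ha]

theorem opt_WLe (hv01 : ∀ i c, c ∈ P i → v i c ∈ Set.Icc (0 : ℝ) 1) (t : ℝ) (ht : 0 ≤ t) :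
    WLe (n := n) (fun x => t * OPTval d n kvec P v x - (∑ i, kvec i : ℕ) * t ^ 2 / 2)
      (fun x => t * OPTval d n kvec P v x) := by
  intro x ι _ w Y hw hw1
  obtain ⟨f, hf, hst⟩ := opt_stab (kvec := kvec) hv01 x
  set c : Fin n → ℝ := fun j => ∑ i, if Y i j ≠ x j then w i else 0 with hc
  have h1 : OPTval d n kvec P v x ≤ ∑ i, w i * OPTval d n kvec P v (Y i) +
      ∑ l, (f l).elim 0 c := by
    calc OPTval d n kvec P v x = ∑ i, w i * OPTval d n kvec P v x := by
          rw [← Finset.sum_mul, hw1, one_mul]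
      _ ≤ ∑ i, w i * (OPTval d n kvec P v (Y i) +
            ∑ l, (f l).elim 0 (fun j => if Y i j ≠ x j then (1 : ℝ) else 0)) :=
          Finset.sum_le_sum fun i _ => mul_le_mul_of_nonneg_left (hst _) (hw i)
      _ = _ := by
          simp only [mul_add, Finset.sum_add_distrib, Finset.mul_sum]
          congr 1
          rw [Finset.sum_comm]
          apply Finset.sum_congr rfl
          intro l _
          cases f l with
          | none => simp
          | some j => simp [hc]
  have h2 : t * ∑ l, (f l).elim 0 c ≤ (∑ i, kvec i : ℕ) * t ^ 2 / 2 + wcost x w Y / 2 := by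
    have h3 := sum_elim_le f hf (fun j => c j ^ 2) (fun j => sq_nonneg _)
    have h4 : t * ∑ l, (f l).elim 0 c ≤
        ∑ l, (t ^ 2 / 2 + (f l).elim 0 (fun j => c j ^ 2) / 2) := by
      rw [Finset.mul_sum]
      apply Finset.sum_le_sum
      intro l _
      cases f l with
      | none => simp; positivity
      | some j => simp; nlinarith [sq_nonneg (t - c j)]
    rw [Finset.sum_add_distrib, ← Finset.sum_div, ← Finset.sum_div] at h4
    have h5 : ∑ l : (i : Fin d) × Fin (kvec i), t ^ 2 = (∑ i, kvec i : ℕ) * t ^ 2 := by simp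
    have h6 : wcost x w Y = ∑ j, c j ^ 2 := rfl
    rw [h6, ← h5]
    linarith
  have h7 := mul_le_mul_of_nonneg_left h1 ht
  rw [mul_add, Finset.mul_sum] at h7
  simp only [mul_left_comm (w _) t]
  linarith

end

/-- concentration of the optimal value: for `C ∼ Dⁿ`,
`Pr[|OPT(C) − E OPT(C)| ≥ α] ≤ 2 exp(−α²/2k)` where `k = ∑ kᵢ`. -/
theorem stmt8 {𝓧 : Type*} [MeasurableSpace 𝓧] (μ : Measure 𝓧)
    [IsProbabilityMeasure μ] (d n k : ℕ) (kvec : Fin d → ℕ) (hk : ∑ i, kvec i = k)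
    (hkpos : 0 < k)
    (P : Fin d → Set 𝓧) (hP : ∀ i, MeasurableSet (P i))
    (v : Fin d → 𝓧 → ℝ) (hvmeas : ∀ i, Measurable (v i))
    (hv01 : ∀ i c, c ∈ P i → v i c ∈ Set.Icc (0 : ℝ) 1)
    (α : ℝ) (hα : 0 < α) :
    (Measure.pi fun _ : Fin n => μ)
        {C | α ≤ |OPTval d n kvec P v C -
          ∫ C', OPTval d n kvec P v C' ∂(Measure.pi fun _ : Fin n => μ)|}
      ≤ ENNReal.ofReal (2 * Real.exp (-α ^ 2 / (2 * k))) := by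
  subst hk
  have hS := mgf_bound μ (opt_meas (n := n) (kvec := kvec) hP hvmeas) (opt_abs hv01)
    (opt_WLe hv01)
  have hu := hS.measure_ge_le hα.le
  have hl := hS.neg.measure_ge_le hα.le
  set E := ∫ C', OPTval d n kvec P v C' ∂(Measure.pi fun _ : Fin n => μ) with hE
  have hsub : {C | α ≤ |OPTval d n kvec P v C - E|} ⊆
      {C | α ≤ OPTval d n kvec P v C - E} ∪
        {C | α ≤ (-fun C => OPTval d n kvec P v C - E) C} := by
    intro C hC
    rcases le_abs.1 (show α ≤ |OPTval d n kvec P v C - E| from hC) with h | h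
    · exact Or.inl h
    · exact Or.inr h
  refine (measure_mono hsub).trans ((measure_union_le _ _).trans ?_)
  rw [two_mul, ENNReal.ofReal_add (Real.exp_pos _).le (Real.exp_pos _).le]
  refine add_le_add ?_ ?_
  · rw [← ENNReal.ofReal_toReal (measure_ne_top _ {C | α ≤ OPTval d n kvec P v C - E})]
    exact ENNReal.ofReal_le_ofReal (by simpa [Measure.real] using hu)
  · rw [← ENNReal.ofReal_toReal (measure_ne_top _
      {C | α ≤ (-fun C => OPTval d n kvec P v C - E) C})]
    exact ENNReal.ofReal_le_ofReal (by simpa [Measure.real] using hl)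
end
end
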